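/- arXiv:2206.08149 — 9 statements merged into one kernel-verified Lean document; each statement's English description precedes it below -/
import Mathlib

section
/- Let a, b ∈ ℝⁿ. If a majorizes b in the natural order, then the isotonic projection a⁺ majorizes b⁺ in the natural order. -/
open Finset

/-- The isotonic cone `{x : x₁ ≥ x₂ ≥ ⋯ ≥ xₙ}` in `ℝⁿ`. -/
def isoCone (n : ℕ) : Set (EuclideanSpace ℝ (Fin n)) :=
  {x | ∀ i j : Fin n, i ≤ j → x j ≤ x i}

/-- `p` is the metric (Euclidean) projection of `y` onto `S`. -/
def IsProjOn {n : ℕ} (S : Set (EuclideanSpace ℝ (Fin n)))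
    (y p : EuclideanSpace ℝ (Fin n)) : Prop :=
  p ∈ S ∧ ∀ r ∈ S, ‖y - p‖ ≤ ‖y - r‖

/-- `a` majorizes `b` in the natural order: every initial partial sum of `a`
is at least that of `b`, with equality for the total sums. -/
def MajNO {n : ℕ} (a b : Fin n → ℝ) : Prop :=
  (∀ k : Fin n, ∑ i ∈ Finset.Iic k, b i ≤ ∑ i ∈ Finset.Iic k, a i) ∧
  ∑ i, a i = ∑ i, b i

theorem iso_var {n : ℕ} {y p : EuclideanSpace ℝ (Fin n)}
    (h : IsProjOn (isoCone n) y p) (r : EuclideanSpace ℝ (Fin n)) (hr : r ∈ isoCone n) :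
    ∑ i, (y i - p i) * (r i - p i) ≤ 0 := by
  have hc : Convex ℝ (isoCone n) := by
    intro x hx z hz s t hs ht _ i j hij
    have h1 := mul_le_mul_of_nonneg_left (hx i j hij) hs
    have h2 := mul_le_mul_of_nonneg_left (hz i j hij) ht
    simp only [PiLp.add_apply, PiLp.smul_apply, smul_eq_mul]
    linarith
  have hne : Nonempty (isoCone n) := ⟨⟨p, h.1⟩⟩
  have hinf : ‖y - p‖ = ⨅ w : isoCone n, ‖y - w‖ := by
    apply le_antisymm
    · exact le_ciInf fun w => h.2 w w.2
    · exact ciInf_le (f := fun w : isoCone n => ‖y - w‖)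
        ⟨0, by rintro _ ⟨w, rfl⟩; exact norm_nonneg _⟩ ⟨p, h.1⟩
  have := (norm_eq_iInf_iff_real_inner_le_zero hc h.1).1 hinf r hr
  simpa [PiLp.inner_apply, mul_comm] using this

/-- Partial sum of the first `m` entries. -/
def psum {n : ℕ} (x : Fin n → ℝ) (m : ℕ) : ℝ := ∑ i : Fin n, if i.val < m then x i else 0

theorem psum_succ {n : ℕ} (x : Fin n → ℝ) (m : ℕ) (hm : m < n) :
    psum x (m + 1) = psum x m + x ⟨m, hm⟩ := by
  have : x ⟨m, hm⟩ = ∑ i : Fin n, if i = ⟨m, hm⟩ then x i else 0 := by simp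
  rw [this, psum, psum, ← Finset.sum_add_distrib]
  refine Finset.sum_congr rfl fun i _ => ?_
  have : i = ⟨m, hm⟩ ↔ i.val = m := by rw [Fin.ext_iff]
  simp only [this]
  split_ifs <;> first | omega | simp

theorem psum_Iic {n : ℕ} (x : Fin n → ℝ) (k : Fin n) :
    psum x (k.val + 1) = ∑ i ∈ Finset.Iic k, x i := by
  rw [psum, ← Finset.sum_filter]
  congr 1
  ext i
  simp only [Finset.mem_filter, Finset.mem_univ, true_and, Finset.mem_Iic]
  exact Nat.lt_succ_iff

theorem psum_all {n : ℕ} (x : Fin n → ℝ) : psum x n = ∑ i, x i := by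
  simp [psum]

theorem iso_dir {n : ℕ} {y p : EuclideanSpace ℝ (Fin n)}
    (h : IsProjOn (isoCone n) y p) (m : ℕ) (t : ℝ)
    (ht : ∀ i j : Fin n, i.val < m → m ≤ j.val → p j ≤ p i + t) :
    t * (psum y m - psum p m) ≤ 0 := by
  have := iso_var h (WithLp.toLp 2 fun i => p i + if i.val < m then t else 0) (by
    intro i j hij
    have h1 := h.1 i j hij
    have h2 := ht i j
    have h3 : i.val ≤ j.val := hij
    simp only
    split_ifs with c1 c2 c2
    · linarith
    · omega
    · linarith [h2 c2 (by omega)]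
    · linarith)
  convert this using 1
  rw [psum, psum, ← Finset.sum_sub_distrib, Finset.mul_sum]
  refine Finset.sum_congr rfl fun i _ => ?_
  simp only
  split_ifs <;> ring

theorem iso_le {n : ℕ} {y p : EuclideanSpace ℝ (Fin n)}
    (h : IsProjOn (isoCone n) y p) (m : ℕ) : psum y m ≤ psum p m := by
  have := iso_dir h m 1 (fun i j hi hj => by
    linarith [h.1 i j (Fin.le_def.2 (by omega))])
  linarith

theorem iso_tot {n : ℕ} {y p : EuclideanSpace ℝ (Fin n)}
    (h : IsProjOn (isoCone n) y p) : psum y n = psum p n := by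
  have := iso_dir h n (-1) (fun i j hi hj => by omega)
  linarith [iso_le h n]

theorem iso_eq {n : ℕ} {y p : EuclideanSpace ℝ (Fin n)}
    (h : IsProjOn (isoCone n) y p) (m : ℕ) (hm : m + 1 < n)
    (hlt : p ⟨m + 1, hm⟩ < p ⟨m, by omega⟩) : psum p (m + 1) = psum y (m + 1) := by
  have := iso_dir h (m + 1) (p ⟨m + 1, hm⟩ - p ⟨m, by omega⟩) (fun i j hi hj => by
    have h1 := h.1 i ⟨m, by omega⟩ (Fin.le_def.2 (by simp only; omega))
    have h2 := h.1 ⟨m + 1, hm⟩ j (Fin.le_def.2 (by simp only; omega))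
    linarith)
  have h2 := iso_le h (m + 1)
  nlinarith

/-- Lemma 6.3 (`lm:maj`): isotonic projection preserves majorization in the natural order. -/
theorem isoProj_majNO {n : ℕ} (a b ap bp : EuclideanSpace ℝ (Fin n))
    (hap : IsProjOn (isoCone n) a ap) (hbp : IsProjOn (isoCone n) b bp)
    (h : MajNO a b) : MajNO ap bp := by
  have hm : ∀ m, m ≤ n → psum b m ≤ psum a m := by
    intro m hmn
    rcases m with _ | m
    · simp [psum]
    · have := h.1 ⟨m, by omega⟩
      rwa [← psum_Iic, ← psum_Iic] at this
  have htot : psum ap n = psum bp n := by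
    rw [← iso_tot hap, ← iso_tot hbp, psum_all, psum_all]
    exact h.2
  have hstep : ∀ m, (hmn : m + 1 < n) → psum ap (m + 1) < psum bp (m + 1) →
      ap ⟨m, by omega⟩ < bp ⟨m, by omega⟩ → ap ⟨m + 1, hmn⟩ < bp ⟨m + 1, hmn⟩ := by
    intro m hmn h1 h2
    have h3 := hap.1 ⟨m, by omega⟩ ⟨m + 1, hmn⟩ (Fin.le_def.2 (by simp))
    by_contra hcon
    have h4 := iso_eq hbp m hmn (by linarith)
    have h5 := hm (m + 1) hmn.le
    have h6 := iso_le hap (m + 1)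
    linarith
  -- once negative, the difference stays negative and keeps decreasing
  have hneg : ∀ m, (hmn : m < n) → psum ap (m + 1) < psum bp (m + 1) →
      ap ⟨m, hmn⟩ < bp ⟨m, hmn⟩ := by
    intro m
    induction m with
    | zero =>
      intro hmn h1
      rw [psum_succ _ _ hmn, psum_succ _ _ hmn] at h1
      simpa [psum] using h1
    | succ m ih =>
      intro hmn h1
      by_cases hc : psum ap (m + 1) < psum bp (m + 1)
      · exact hstep m hmn hc (ih (by omega) hc)
      · rw [psum_succ _ _ hmn, psum_succ _ _ hmn] at h1
        linarith
  have hprop : ∀ m, m + 1 < n → psum ap (m + 1) < psum bp (m + 1) →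
      psum ap (m + 2) < psum bp (m + 2) := by
    intro m hmn h1
    have := hstep m hmn h1 (hneg m (by omega) h1)
    rw [psum_succ _ (m + 1) hmn, psum_succ _ (m + 1) hmn]
    linarith
  refine ⟨fun k => ?_, ?_⟩
  · rw [← psum_Iic, ← psum_Iic]
    by_contra hcon
    push Not at hcon
    have hall : ∀ j, k.val + 1 + j ≤ n →
        psum ap (k.val + 1 + j) < psum bp (k.val + 1 + j) := by
      intro j
      induction j with
      | zero => intro _; exact hcon
      | succ j ih =>
        intro hj
        have := hprop (k.val + j) (by omega)
          (by have := ih (by omega); rwa [show k.val + 1 + j = k.val + j + 1 by omega] at this)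
        rwa [show k.val + 1 + (j + 1) = k.val + j + 2 by omega]
    have hk := k.2
    have := hall (n - (k.val + 1)) (by omega)
    rw [show k.val + 1 + (n - (k.val + 1)) = n by omega] at this
    linarith
  · rw [← psum_all, ← psum_all]
    exact htot
end

section
/- Let a, b ∈ ℝⁿ with a majorizing b in the natural order. Then there exist a positive integer L and vectors w¹,…,w^L ∈ ℝⁿ with w¹ = a, w^L = b, such that w^l is an upward transport of w^{l+1} for every 1 ≤ l ≤ L−1. -/
open Finset

/-- `a` is an upward transport of `b`: `a` is obtained from `b` by moving some mass
from entry `j` to an earlier entry `i < j`. -/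
def UpwardTransport {n : ℕ} (a b : Fin n → ℝ) : Prop :=
  ∃ i j : Fin n, i < j ∧ (∀ k, k ≠ i → k ≠ j → a k = b k) ∧
    a i + a j = b i + b j ∧ b i ≤ a i

/-- Lemma 6.5 (`lm:seq`): if `a ≽ₙₒ b`, there is a finite chain `w¹ = a, …, w^L = b`
in which each vector is an upward transport of the next. -/
theorem majNO_chain_upwardTransport {n : ℕ} (a b : Fin n → ℝ) (h : MajNO a b) :
    ∃ (L : ℕ) (w : ℕ → Fin n → ℝ), 1 ≤ L ∧ w 1 = a ∧ w L = b ∧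
      ∀ l, 1 ≤ l → l ≤ L - 1 → UpwardTransport (w l) (w (l + 1)) := by
  classical
  rcases Nat.eq_zero_or_pos n with h0 | hn
  · subst h0
    exact ⟨1, fun _ => a, le_rfl, rfl, Subsingleton.elim _ _, fun l h1 h2 => by omega⟩
  obtain ⟨hle, heq⟩ := h
  -- partial sums of the differences
  obtain ⟨S, hS⟩ : ∃ S : ℕ → ℝ, ∀ m, S m = ∑ i : Fin n with i.val < m, (a i - b i) :=
    ⟨_, fun _ => rfl⟩
  have S0 : S 0 = 0 := by simp [hS]
  have Sn : S n = 0 := by simp [hS, heq]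
  have Ss : ∀ k : Fin n, S (k.val + 1) = S k.val + (a k - b k) := by
    intro k
    have : (Finset.univ.filter fun i : Fin n => i.val < k.val + 1) =
        insert k (Finset.univ.filter fun i : Fin n => i.val < k.val) := by
      ext i
      simp only [Finset.mem_filter, Finset.mem_univ, true_and, Finset.mem_insert, Fin.ext_iff]
      omega
    rw [hS, hS, this, Finset.sum_insert (by simp)]
    ring
  have Snn : ∀ k : Fin n, 0 ≤ S (k.val + 1) := by
    intro k
    have : (Finset.univ.filter fun i : Fin n => i.val < k.val + 1) = Finset.Iic k := by
      ext i
      simp only [Finset.mem_filter, Finset.mem_univ, true_and, Finset.mem_Iic, Fin.le_def]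
      omega
    rw [hS, this, Finset.sum_sub_distrib]
    linarith [hle k]
  refine ⟨n, fun l k => if k.val + 1 < l then b k else
    if k.val + 1 = l then a k + S k.val else a k, hn, ?_, ?_, ?_⟩
  · funext k
    by_cases hk : k.val = 0
    · simp [hk, S0]
    · simp [hk]
  · funext k
    have hk := k.isLt
    by_cases hk1 : k.val + 1 < n
    · simp [hk1]
    · have e : k.val + 1 = n := by omega
      have := Ss k
      rw [e, Sn] at this
      simp only [e, lt_irrefl, if_true, if_false]
      linarith
  · intro l h1 h2
    obtain ⟨m, rfl⟩ : ∃ m, l = m + 1 := ⟨l - 1, by omega⟩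
    have hs := Ss ⟨m, by omega⟩
    have hp := Snn ⟨m, by omega⟩
    refine ⟨⟨m, by omega⟩, ⟨m + 1, by omega⟩, by simp [Fin.lt_def], ?_, ?_, ?_⟩
    · intro k k1 k2
      simp only [ne_eq, Fin.ext_iff] at k1 k2
      beta_reduce
      by_cases hk : k.val < m
      · rw [if_pos (by omega), if_pos (by omega)]
      · rw [if_neg (by omega), if_neg (by omega), if_neg (by omega), if_neg (by omega)]
    · simp at hs ⊢
      linarith
    · simp at hs hp ⊢
      linarith
end

section
/- For every a ∈ ℝⁿ, every δ > 0, and every index i ∈ {1,…,n}, the isotonic projection satisfies (a + δ·eᵢ)⁺ ≥ a⁺ in the component-wise sense, where eᵢ is the i-th canonical basis vector of ℝⁿ; likewise (a − δ·eᵢ)⁺ ≤ a⁺ component-wise. Moreover, the sum of the entries of (a + δ·eᵢ)⁺ equals the sum of the entries of a⁺ plus δ. -/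
open Finset

theorem isoProj_var {n : ℕ} {a p : EuclideanSpace ℝ (Fin n)}
    (h : IsProjOn (isoCone n) a p) (r : Fin n → ℝ)
    (hr : ∀ t : ℝ, 0 ≤ t → t ≤ 1 → WithLp.toLp 2 (fun k => p k + t * r k) ∈ isoCone n) :
    ∑ k, (a k - p k) * r k ≤ 0 := by
  by_contra hS
  push Not at hS
  set S := ∑ k, (a k - p k) * r k with hSd
  set R := ∑ k, r k ^ 2 with hRd
  have hR : 0 ≤ R := Finset.sum_nonneg fun k _ => sq_nonneg _
  have hpos : 0 < S + R := by linarith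
  have key : ∀ t : ℝ, 0 ≤ t → t ≤ 1 → 0 ≤ -2 * t * S + t ^ 2 * R := by
    intro t h0 h1
    have h2 := h.2 _ (hr t h0 h1)
    have h3 := pow_le_pow_left₀ (norm_nonneg _) h2 2
    rw [EuclideanSpace.real_norm_sq_eq, EuclideanSpace.real_norm_sq_eq] at h3
    have h4 : -2 * t * S + t ^ 2 * R
        = ∑ k, (a k - (p k + t * r k)) ^ 2 - ∑ k, (a k - p k) ^ 2 := by
      rw [hSd, hRd, Finset.mul_sum, Finset.mul_sum, ← Finset.sum_add_distrib,
        ← Finset.sum_sub_distrib]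
      exact Finset.sum_congr rfl fun k _ => by ring
    rw [h4]
    simpa using h3
  have h5 := key (S / (S + R)) (by positivity) (by rw [div_le_one hpos]; linarith)
  have h6 : -2 * (S / (S + R)) * S + (S / (S + R)) ^ 2 * R
      = -(S ^ 2 * (2 * S + R)) / (S + R) ^ 2 := by
    field_simp
    ring
  rw [h6] at h5
  have : 0 < (S ^ 2 * (2 * S + R)) / (S + R) ^ 2 := by positivity
  rw [neg_div] at h5
  linarith

theorem isoProj_mono {n : ℕ} {a b p q : EuclideanSpace ℝ (Fin n)}
    (hab : ∀ k, a k ≤ b k)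
    (hp : IsProjOn (isoCone n) a p) (hq : IsProjOn (isoCone n) b q) (k : Fin n) :
    p k ≤ q k := by
  have h1 := isoProj_var hp (fun k => - max (p k - q k) 0) (by
    intro t h0 h1 i j hij
    have e1 := hp.1 i j hij
    have e2 := hq.1 i j hij
    simp only
    rcases max_cases (p i - q i) 0 with ⟨u, u'⟩ | ⟨u, u'⟩ <;>
    rcases max_cases (p j - q j) 0 with ⟨v, v'⟩ | ⟨v, v'⟩ <;> rw [u, v] <;> nlinarith)
  have h2 := isoProj_var hq (fun k => max (p k - q k) 0) (by
    intro t h0 h1 i j hij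
    have e1 := hp.1 i j hij
    have e2 := hq.1 i j hij
    simp only
    rcases max_cases (p i - q i) 0 with ⟨u, u'⟩ | ⟨u, u'⟩ <;>
    rcases max_cases (p j - q j) 0 with ⟨v, v'⟩ | ⟨v, v'⟩ <;> rw [u, v] <;> nlinarith)
  have h3 : ∑ k, (max (p k - q k) 0) ^ 2 ≤ 0 := by
    refine le_trans ?_ (add_nonpos h1 h2)
    rw [← Finset.sum_add_distrib]
    refine Finset.sum_le_sum fun k _ => ?_
    have := hab k
    rcases max_cases (p k - q k) 0 with ⟨u, u'⟩ | ⟨u, u'⟩ <;> rw [u] <;> nlinarith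
  have h4 := Finset.single_le_sum (f := fun k => (max (p k - q k) 0) ^ 2)
    (fun k _ => sq_nonneg _) (Finset.mem_univ k)
  have h5 : max (p k - q k) 0 = 0 := by
    have : (max (p k - q k) 0) ^ 2 ≤ 0 := le_trans h4 h3
    exact pow_eq_zero_iff (two_ne_zero) |>.1 (le_antisymm this (sq_nonneg _))
  have := le_max_left (p k - q k) 0
  linarith

theorem isoProj_sum {n : ℕ} {a p : EuclideanSpace ℝ (Fin n)}
    (hp : IsProjOn (isoCone n) a p) : ∑ k, p k = ∑ k, a k := by
  have h1 := isoProj_var hp (fun _ => 1) (by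
    intro t h0 h1 i j hij
    have e1 := hp.1 i j hij
    simp only
    linarith)
  have h2 := isoProj_var hp (fun _ => -1) (by
    intro t h0 h1 i j hij
    have e1 := hp.1 i j hij
    simp only
    linarith)
  simp only [mul_one, mul_neg, Finset.sum_neg_distrib, Finset.sum_sub_distrib] at h1 h2
  linarith

/-- Lemma 6.7 (`lm:mono`) together with Remark 6.1: the isotonic projection is monotone
under adding (resp. subtracting) `δ` at one coordinate, and the sum of entries of
`(a + δ eᵢ)⁺` equals that of `a⁺` plus `δ`. -/
theorem isoProj_componentwise_mono {n : ℕ} (a : EuclideanSpace ℝ (Fin n))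
    (δ : ℝ) (hδ : 0 < δ) (i : Fin n)
    (ap bp cp : EuclideanSpace ℝ (Fin n))
    (hap : IsProjOn (isoCone n) a ap)
    (hbp : IsProjOn (isoCone n) (a + EuclideanSpace.single i δ) bp)
    (hcp : IsProjOn (isoCone n) (a - EuclideanSpace.single i δ) cp) :
    (∀ k : Fin n, ap k ≤ bp k) ∧ (∀ k : Fin n, cp k ≤ ap k) ∧
      ∑ k, bp k = (∑ k, ap k) + δ := by
  refine ⟨isoProj_mono ?_ hap hbp, isoProj_mono ?_ hcp hap, ?_⟩
  · intro k
    by_cases h : k = i <;> simp [h, hδ.le]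
  · intro k
    by_cases h : k = i <;> simp [h, hδ.le]
  · rw [isoProj_sum hap, isoProj_sum hbp]
    simp [Finset.sum_add_distrib]
end

section
/- Let a ∈ ℝⁿ and let ā = (a₁ + ⋯ + aₙ)/n denote its mean. The isotonic projection a⁺ has all entries equal (i.e., a⁺₁ = a⁺₂ = ⋯ = a⁺ₙ) if and only if (a₁ + ⋯ + a_k)/k ≤ ā for every k = 1,…,n. -/
open Finset

theorem iso_abel {n : ℕ} (b d : Fin n → ℝ) (hd : ∀ i j : Fin n, i ≤ j → d j ≤ d i)
    (hb : ∀ k : Fin n, ∑ i ∈ Finset.Iic k, b i ≤ 0) (m : ℕ) (hm : m < n) :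
    ∑ i ∈ Finset.Iic (⟨m, hm⟩ : Fin n), b i * d i
      ≤ d ⟨m, hm⟩ * ∑ i ∈ Finset.Iic (⟨m, hm⟩ : Fin n), b i := by
  induction m with
  | zero =>
    have h : Finset.Iic (⟨0, hm⟩ : Fin n) = {⟨0, hm⟩} := by
      ext x
      simp only [Finset.mem_Iic, Finset.mem_singleton, Fin.le_def, Fin.ext_iff]
      omega
    rw [h]
    simp [mul_comm]
  | succ m ih =>
    have hm' : m < n := by omega
    have h : Finset.Iic (⟨m + 1, hm⟩ : Fin n) = insert ⟨m + 1, hm⟩ (Finset.Iic ⟨m, hm'⟩) := by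
      ext x
      simp only [Finset.mem_Iic, Finset.mem_insert, Fin.le_def, Fin.ext_iff]
      omega
    have hn : (⟨m + 1, hm⟩ : Fin n) ∉ Finset.Iic (⟨m, hm'⟩ : Fin n) := by
      simp [Fin.le_def]
    rw [h, Finset.sum_insert hn, Finset.sum_insert hn]
    have h1 := ih hm'
    have h2 := hb ⟨m, hm'⟩
    have h3 := hd ⟨m, hm'⟩ ⟨m + 1, hm⟩ (by simp [Fin.le_def])
    nlinarith [mul_nonneg (sub_nonneg.2 h3) (neg_nonneg.2 h2)]

theorem iso_inner_le {n : ℕ} (a ap : EuclideanSpace ℝ (Fin n))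
    (hap : IsProjOn (isoCone n) a ap) (d : Fin n → ℝ)
    (hd : ∀ i j : Fin n, i ≤ j → d j ≤ d i) : ∑ i, (a i - ap i) * d i ≤ 0 := by
  have key : ∀ t : ℝ, 0 < t → 2 * ∑ i, (a i - ap i) * d i ≤ t * ∑ i, d i ^ 2 := by
    intro t ht
    have h := hap.2 (ap + t • WithLp.toLp 2 d) (by
      intro i j hij
      have h1 := hap.1 i j hij
      have h2 := mul_le_mul_of_nonneg_left (hd i j hij) ht.le
      simp only [PiLp.add_apply, PiLp.smul_apply, smul_eq_mul]
      linarith)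
    have h' := pow_le_pow_left₀ (norm_nonneg _) h 2
    rw [EuclideanSpace.real_norm_sq_eq, EuclideanSpace.real_norm_sq_eq] at h'
    simp only [PiLp.sub_apply, PiLp.add_apply, PiLp.smul_apply, smul_eq_mul] at h'
    have e : ∑ i, (a i - (ap i + t * d i)) ^ 2 = ∑ i, (a i - ap i) ^ 2
        - 2 * t * ∑ i, (a i - ap i) * d i + t ^ 2 * ∑ i, d i ^ 2 := by
      rw [Finset.mul_sum, Finset.mul_sum, ← Finset.sum_sub_distrib, ← Finset.sum_add_distrib]
      exact Finset.sum_congr rfl fun i _ => by ring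
    rw [e] at h'
    refine le_of_mul_le_mul_left ?_ ht
    nlinarith
  by_contra hc
  push Not at hc
  have hD : 0 ≤ ∑ i, d i ^ 2 := Finset.sum_nonneg fun i _ => sq_nonneg _
  have h := key ((∑ i, (a i - ap i) * d i) / (∑ i, d i ^ 2 + 1)) (by positivity)
  rw [div_mul_eq_mul_div, le_div_iff₀ (by positivity)] at h
  nlinarith [mul_nonneg hc.le hD]

/-- Lemma 6.8 (`lm:single_val`): the isotonic projection `a⁺` is a constant vector
iff every initial average of `a` is at most the overall mean of `a`. -/
theorem isoProj_const_iff {n : ℕ} (a ap : EuclideanSpace ℝ (Fin n))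
    (hap : IsProjOn (isoCone n) a ap) :
    (∀ i j : Fin n, ap i = ap j) ↔
      ∀ k : Fin n, (∑ i ∈ Finset.Iic k, a i) / (k.1 + 1 : ℝ) ≤ (∑ i, a i) / n := by
  rcases Nat.eq_zero_or_pos n with rfl | hn
  · exact ⟨fun _ k => k.elim0, fun _ k => k.elim0⟩
  have hn' : (0 : ℝ) < n := by exact_mod_cast hn
  constructor
  · intro hc k
    set c := ap k with hcdef
    have hcc : ∀ i, ap i = c := fun i => hc i k
    have h1 := iso_inner_le a ap hap (fun _ => -1) (fun _ _ _ => le_rfl)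
    have h2 := iso_inner_le a ap hap (fun i => if i ≤ k then 1 else 0) (by
      intro i j hij
      by_cases hj : j ≤ k
      · simp [hj, hij.trans hj]
      · simp only [hj, if_false]
        split_ifs <;> norm_num)
    simp only [hcc, mul_neg, mul_one, Finset.sum_neg_distrib, Finset.sum_sub_distrib,
      Finset.sum_const, Finset.card_univ, Fintype.card_fin, nsmul_eq_mul] at h1
    simp only [hcc, mul_ite, mul_one, mul_zero, ← Finset.sum_filter] at h2
    have hf : Finset.univ.filter (fun i : Fin n => i ≤ k) = Finset.Iic k := by
      ext x; simp
    rw [hf, Finset.sum_sub_distrib, Finset.sum_const, Fin.card_Iic, nsmul_eq_mul] at h2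
    push_cast at h2
    have hk : (0 : ℝ) < (k.1 : ℝ) + 1 := by positivity
    calc _ ≤ c := by rw [div_le_iff₀ hk]; linarith
      _ ≤ _ := by rw [le_div_iff₀ hn']; linarith
  · intro h
    set m := (∑ i, a i) / n with hm
    have hb : ∀ k : Fin n, ∑ i ∈ Finset.Iic k, (a i - m) ≤ 0 := by
      intro k
      have hk : (0 : ℝ) < (k.1 : ℝ) + 1 := by positivity
      have := h k
      rw [div_le_iff₀ hk] at this
      rw [Finset.sum_sub_distrib, Finset.sum_const, Fin.card_Iic, nsmul_eq_mul]
      push_cast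
      linarith
    have htot : ∑ i, (a i - m) = 0 := by
      rw [Finset.sum_sub_distrib, Finset.sum_const, Finset.card_univ, Fintype.card_fin,
        nsmul_eq_mul, hm]
      field_simp
      ring
    have hA := iso_abel (fun i => a i - m) (fun i => ap i - m)
      (fun i j hij => by have := hap.1 i j hij; linarith) hb (n - 1) (by omega)
    have hu : Finset.Iic (⟨n - 1, by omega⟩ : Fin n) = Finset.univ := by
      ext x
      simp only [Finset.mem_Iic, Finset.mem_univ, Fin.le_def, iff_true]
      omega
    rw [hu, htot, mul_zero] at hA
    have h1 := hap.2 (WithLp.toLp 2 fun _ => m) (fun _ _ _ => le_rfl)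
    have h' := pow_le_pow_left₀ (norm_nonneg _) h1 2
    rw [EuclideanSpace.real_norm_sq_eq, EuclideanSpace.real_norm_sq_eq] at h'
    simp only [PiLp.sub_apply] at h'
    have e : ∑ i, (a i - ap i) ^ 2 = ∑ i, (a i - m) ^ 2
        - 2 * ∑ i, (a i - m) * (ap i - m) + ∑ i, (ap i - m) ^ 2 := by
      rw [Finset.mul_sum, ← Finset.sum_sub_distrib, ← Finset.sum_add_distrib]
      exact Finset.sum_congr rfl fun i _ => by ring
    have hz : ∑ i, (ap i - m) ^ 2 = 0 :=
      le_antisymm (by linarith) (Finset.sum_nonneg fun i _ => sq_nonneg _)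
    rw [Finset.sum_eq_zero_iff_of_nonneg (fun i _ => sq_nonneg _)] at hz
    have hall : ∀ i, ap i = m := fun i => by
      have := hz i (Finset.mem_univ i)
      rw [sq_eq_zero_iff] at this
      linarith
    intro i j
    rw [hall, hall]
end

section
/- Let a ∈ ℝⁿ have pairwise distinct entries. Then there exists δ > 0 such that for all b₁, b₂ ∈ ℝⁿ with b₁ + b₂ = 2a and ‖b₁ − b₂‖ < δ (Euclidean norm), if both b₁ weakly majorizes a and b₂ weakly majorizes a, then b₁ = b₂ = a. -/
open Finset

/-- The sum of the `k` largest entries of `a`, expressed as the supremum of the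
sums of `a` over subsets of cardinality `k`. -/
noncomputable def sumTopK {n : ℕ} (a : Fin n → ℝ) (k : ℕ) : ℝ :=
  sSup {x : ℝ | ∃ s : Finset (Fin n), s.card = k ∧ x = ∑ i ∈ s, a i}

/-- `a` weakly majorizes `b`: for every `k = 1, …, n`, the sum of the `k` largest
entries of `a` is at least the sum of the `k` largest entries of `b`. -/
def WeakMaj {n : ℕ} (a b : Fin n → ℝ) : Prop :=
  ∀ k : ℕ, 1 ≤ k → k ≤ n → sumTopK b k ≤ sumTopK a k

theorem sum_le_of_upper {n : ℕ} (c : Fin n → ℝ) (U s : Finset (Fin n))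
    (hU : ∀ x ∈ U, ∀ y ∉ U, c y ≤ c x) (hs : s.card = U.card) :
    ∑ i ∈ s, c i ≤ ∑ i ∈ U, c i := by
  have h1 : (s \ U).card = (U \ s).card := Finset.card_sdiff_comm hs
  have h2 := Finset.sum_sdiff_sub_sum_sdiff (s₁ := s) (s₂ := U) (f := c)
  suffices h : ∑ i ∈ s \ U, c i ≤ ∑ i ∈ U \ s, c i by linarith
  rcases (U \ s).eq_empty_or_nonempty with he | hne
  · have h3 : s \ U = ∅ := by
      rw [← Finset.card_eq_zero, h1, he, Finset.card_empty]
    rw [he, h3]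
  · obtain ⟨m, hm, hmin⟩ := Finset.exists_min_image (U \ s) c hne
    have h4 : ∑ i ∈ s \ U, c i ≤ (s \ U).card • c m := by
      apply Finset.sum_le_card_nsmul
      intro y hy
      exact hU m (Finset.mem_sdiff.1 hm).1 y (Finset.mem_sdiff.1 hy).2
    have h5 : (U \ s).card • c m ≤ ∑ i ∈ U \ s, c i :=
      Finset.card_nsmul_le_sum _ _ _ hmin
    rw [h1] at h4
    exact h4.trans h5

theorem sumTopK_upper {n : ℕ} (c : Fin n → ℝ) (U : Finset (Fin n))
    (hU : ∀ x ∈ U, ∀ y ∉ U, c y ≤ c x) : sumTopK c U.card = ∑ i ∈ U, c i := by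
  apply IsGreatest.csSup_eq
  refine ⟨⟨U, rfl, rfl⟩, ?_⟩
  rintro x ⟨s, hs, rfl⟩
  exact sum_le_of_upper c U s hU hs

theorem exists_gap {n : ℕ} (a : Fin n → ℝ) :
    ∃ δ > 0, ∀ i j, a i < a j → δ ≤ a j - a i := by
  have h : ∀ᶠ δ in nhdsWithin (0 : ℝ) (Set.Ioi 0), ∀ i j, a i < a j → δ ≤ a j - a i := by
    rw [Filter.eventually_all]
    intro i
    rw [Filter.eventually_all]
    intro j
    by_cases hij : a i < a j
    · have : ∀ᶠ δ in nhds (0 : ℝ), δ < a j - a i := eventually_lt_nhds (by linarith)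
      filter_upwards [nhdsWithin_le_nhds this] with δ hδ _ using hδ.le
    · exact Filter.Eventually.of_forall fun _ h => absurd h hij
  obtain ⟨δ, h1, h2⟩ := (h.and self_mem_nhdsWithin).exists
  exact ⟨δ, h2, h1⟩

/-- Lemma 6.2 (`lm:notie`): if `a` has pairwise distinct entries, then for `b₁, b₂`
with `b₁ + b₂ = 2a` close enough to each other, `b₁ ≽_w a` and `b₂ ≽_w a` force
`b₁ = b₂ = a`. -/
theorem no_tie_weakMaj {n : ℕ} (a : EuclideanSpace ℝ (Fin n))
    (ha : Function.Injective a) :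
    ∃ δ > 0, ∀ b₁ b₂ : EuclideanSpace ℝ (Fin n),
      b₁ + b₂ = (2 : ℝ) • a → ‖b₁ - b₂‖ < δ →
      WeakMaj b₁ a → WeakMaj b₂ a → b₁ = a ∧ b₂ = a := by
  obtain ⟨δ, hδ, hgap⟩ := exists_gap a
  refine ⟨δ, hδ, fun b₁ b₂ hsum hn h₁ h₂ => ?_⟩
  have hs : ∀ i, b₁ i + b₂ i = 2 * a i := fun i => by
    have := congrArg (fun v : EuclideanSpace ℝ (Fin n) => v i) hsum
    simpa using this
  have hd : ∀ i, |b₁ i - b₂ i| < δ := fun i => by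
    have := PiLp.norm_apply_le (b₁ - b₂) i
    rw [PiLp.sub_apply, Real.norm_eq_abs] at this
    exact this.trans_lt hn
  have key : ∀ U : Finset (Fin n), (∀ x ∈ U, ∀ y ∉ U, a y < a x) →
      ∑ i ∈ U, b₁ i = ∑ i ∈ U, a i := by
    intro U hU
    rcases U.eq_empty_or_nonempty with rfl | hne
    · simp
    have hk1 : 1 ≤ U.card := hne.card_pos
    have hk2 : U.card ≤ n := by simpa using Finset.card_le_univ U
    have e1 := h₁ _ hk1 hk2
    have e2 := h₂ _ hk1 hk2
    rw [sumTopK_upper _ U fun x hx y hy => (hU x hx y hy).le,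
      sumTopK_upper _ U fun x hx y hy => ?_] at e1 e2
    · have e3 : ∑ i ∈ U, b₁ i + ∑ i ∈ U, b₂ i = 2 * ∑ i ∈ U, a i := by
        rw [← Finset.sum_add_distrib, Finset.mul_sum]
        exact Finset.sum_congr rfl fun i _ => hs i
      linarith
    all_goals
      have g := hgap y x (hU x hx y hy)
      have := abs_lt.1 (hd x)
      have := abs_lt.1 (hd y)
      have := hs x
      have := hs y
      linarith
  have hb : ∀ i, b₁ i = a i := by
    intro i
    have k1 := key (Finset.univ.filter fun j => a i < a j) (by
      intro x hx y hy
      simp at hx hy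
      linarith)
    have k2 := key (insert i (Finset.univ.filter fun j => a i < a j)) (by
      intro x hx y hy
      simp at hx hy
      have : a y < a i := lt_of_le_of_ne hy.2 fun h => hy.1 (ha h)
      rcases hx with rfl | hx <;> linarith)
    rw [Finset.sum_insert (by simp), Finset.sum_insert (by simp)] at k2
    linarith
  refine ⟨?_, ?_⟩
  · ext i
    exact hb i
  · ext i
    linarith [hb i, hs i]
end

section
/- (Hardy–Littlewood–Pólya) Let a, b ∈ ℝⁿ. (a) The inequality ∑_{i=1}^n h(aᵢ) ≥ ∑_{i=1}^n h(bᵢ) holds for every nondecreasing convex function h : ℝ → ℝ if and only if a weakly majorizes b. (b) The same inequality holds for every convex function h : ℝ → ℝ if and only if a majorizes b. -/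
open Finset

/-- `a` majorizes `b`: weak majorization together with equality of total sums. -/
def Maj {n : ℕ} (a b : Fin n → ℝ) : Prop :=
  WeakMaj a b ∧ ∑ i, a i = ∑ i, b i

theorem hlp_subgrad (h : ℝ → ℝ) (hc : ConvexOn ℝ Set.univ h) (x : ℝ) :
    ∃ g : ℝ, ∀ y, h x + g * (y - x) ≤ h y := by
  have hx : x ∈ interior (Set.univ : Set ℝ) := by simp
  refine ⟨derivWithin h (Set.Ioi x) x, fun y => ?_⟩
  rcases lt_trichotomy x y with hxy | hxy | hxy
  · have h1 := hc.rightDeriv_le_slope_of_mem_interior hx (Set.mem_univ y) hxy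
    rw [slope_def_field, le_div_iff₀ (by linarith)] at h1
    linarith
  · subst hxy; simp
  · have h1 := hc.slope_le_leftDeriv_of_mem_interior (Set.mem_univ y) hx hxy
    have h2 := hc.leftDeriv_le_rightDeriv_of_mem_interior hx
    have h3 := h1.trans h2
    rw [slope_def_field, div_le_iff₀ (by linarith)] at h3
    linarith

theorem hlp_abel (c d : ℕ → ℝ) (n : ℕ)
    (hc : ∀ i j, i ≤ j → j < n → c j ≤ c i)
    (hd : ∀ k, k ≤ n → 0 ≤ ∑ i ∈ range k, d i) :
    ∀ t, (∀ i, i < n → t ≤ c i) → t * ∑ i ∈ range n, d i ≤ ∑ i ∈ range n, c i * d i := by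
  induction n with
  | zero => intro t _; simp
  | succ n ih =>
    intro t ht
    have h1 := ih (fun i j hij hj => hc i j hij (by omega)) (fun k hk => hd k (by omega))
      (c n) (fun i hi => hc i n hi.le (by omega))
    have h2 := hd (n + 1) le_rfl
    have h3 := mul_le_mul_of_nonneg_right (ht n (by omega)) h2
    rw [sum_range_succ] at h3 h2 ⊢
    rw [sum_range_succ]
    linarith

theorem hlp_sort {n : ℕ} (a : Fin n → ℝ) : ∃ σ : Equiv.Perm (Fin n), Antitone (a ∘ σ) := by
  refine ⟨Tuple.sort (fun i => - a i), fun i j hij => ?_⟩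
  have := Tuple.monotone_sort (fun i => - a i) hij
  simp only [Function.comp] at this ⊢
  linarith

theorem hlp_bdd {n : ℕ} (a : Fin n → ℝ) (k : ℕ) :
    BddAbove {x : ℝ | ∃ s : Finset (Fin n), s.card = k ∧ x = ∑ i ∈ s, a i} := by
  refine ⟨∑ i, |a i|, ?_⟩
  rintro x ⟨s, -, rfl⟩
  exact (sum_le_sum fun i _ => le_abs_self _).trans
    (sum_le_sum_of_subset_of_nonneg (subset_univ _) fun i _ _ => abs_nonneg _)

theorem hlp_le_top {n : ℕ} (a : Fin n → ℝ) (s : Finset (Fin n)) :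
    ∑ i ∈ s, a i ≤ sumTopK a s.card :=
  le_csSup (hlp_bdd a _) ⟨s, rfl, rfl⟩

theorem hlp_top_le {n : ℕ} (a : Fin n → ℝ) (k : ℕ) (hk : k ≤ n) (t : ℝ) :
    sumTopK a k ≤ ∑ i, max (a i - t) 0 + k * t := by
  apply csSup_le
  · obtain ⟨s, -, hs⟩ := exists_subset_card_eq (s := (univ : Finset (Fin n))) (n := k) (by simpa)
    exact ⟨_, s, hs, rfl⟩
  · rintro x ⟨s, hs, rfl⟩
    have h1 : ∑ i ∈ s, max (a i - t) 0 ≤ ∑ i, max (a i - t) 0 :=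
      sum_le_sum_of_subset_of_nonneg (subset_univ _) fun i _ _ => le_max_right _ _
    have h2 : ∑ i ∈ s, (a i - t) ≤ ∑ i ∈ s, max (a i - t) 0 :=
      sum_le_sum fun i _ => le_max_left _ _
    rw [sum_sub_distrib, sum_const, hs, nsmul_eq_mul] at h2
    linarith

theorem hlp_card {n : ℕ} (k : ℕ) (hk : k ≤ n) :
    (univ.filter fun i : Fin n => (i : ℕ) < k).card = k := by
  rw [Fin.card_filter_val_lt]; omega

theorem hlp_thresh {n : ℕ} (a : Fin n → ℝ) (σ : Equiv.Perm (Fin n)) (hσ : Antitone (a ∘ σ))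
    (k : ℕ) (h1 : 1 ≤ k) (hk : k ≤ n) :
    ∃ t : ℝ, ∑ i, max (a i - t) 0 + k * t
      = ∑ i ∈ univ.filter (fun i : Fin n => (i : ℕ) < k), a (σ i) := by
  refine ⟨a (σ ⟨k - 1, by omega⟩), ?_⟩
  set t := a (σ ⟨k - 1, by omega⟩) with ht
  rw [← Equiv.sum_comp σ, ← sum_filter_add_sum_filter_not univ (fun i : Fin n => (i : ℕ) < k)]
  have e1 : ∑ i ∈ univ.filter (fun i : Fin n => (i : ℕ) < k), max (a (σ i) - t) 0
      = ∑ i ∈ univ.filter (fun i : Fin n => (i : ℕ) < k), (a (σ i) - t) := by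
    apply sum_congr rfl
    intro i hi
    simp only [mem_filter, mem_univ, true_and] at hi
    have : t ≤ a (σ i) := hσ (show i ≤ ⟨k - 1, by omega⟩ by rw [Fin.le_def]; simp; omega)
    exact max_eq_left (by linarith)
  have e2 : ∑ i ∈ univ.filter (fun i : Fin n => ¬ (i : ℕ) < k), max (a (σ i) - t) 0 = 0 := by
    apply sum_eq_zero
    intro i hi
    simp only [mem_filter, mem_univ, true_and] at hi
    have : a (σ i) ≤ t := hσ (show (⟨k - 1, by omega⟩ : Fin n) ≤ i by rw [Fin.le_def]; simp; omega)
    exact max_eq_right (by linarith)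
  rw [e1, e2, sum_sub_distrib, sum_const, hlp_card k hk, nsmul_eq_mul]
  ring

theorem hlp_top_ge {n : ℕ} (a : Fin n → ℝ) (σ : Equiv.Perm (Fin n)) (k : ℕ) (hk : k ≤ n) :
    ∑ i ∈ univ.filter (fun i : Fin n => (i : ℕ) < k), a (σ i) ≤ sumTopK a k := by
  have := hlp_le_top a ((univ.filter (fun i : Fin n => (i : ℕ) < k)).map σ.toEmbedding)
  rw [card_map, hlp_card k hk, sum_map] at this
  exact this

theorem hlp_weak_of {n : ℕ} (a b : Fin n → ℝ)
    (H : ∀ h : ℝ → ℝ, ConvexOn ℝ Set.univ h → Monotone h → ∑ i, h (b i) ≤ ∑ i, h (a i)) :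
    WeakMaj a b := by
  intro k h1 hk
  obtain ⟨σ, hσ⟩ := hlp_sort a
  obtain ⟨t, ht⟩ := hlp_thresh a σ hσ k h1 hk
  have h2 := hlp_top_le b k hk t
  have h3 := hlp_top_ge a σ k hk
  have h4 := H (fun x => max (x - t) 0)
    (((convexOn_id convex_univ).sub (concaveOn_const t convex_univ)).sup
      (convexOn_const 0 convex_univ))
    (fun x y hxy => max_le_max (by linarith) le_rfl)
  linarith

theorem hlp_ext {n : ℕ} (f : Fin n → ℝ) (k : ℕ) (hk : k ≤ n) :
    ∑ i ∈ range k, (if h : i < n then f ⟨i, h⟩ else 0)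
      = ∑ i ∈ univ.filter (fun i : Fin n => (i : ℕ) < k), f i := by
  symm
  apply sum_bij (fun (i : Fin n) _ => (i : ℕ))
  · intro i hi; simpa using hi
  · intro i _ j _ h; exact Fin.ext h
  · intro i hi
    rw [mem_range] at hi
    exact ⟨⟨i, by omega⟩, by simpa using hi, rfl⟩
  · intro i _; simp

theorem hlp_of_weak {n : ℕ} (a b : Fin n → ℝ) (W : WeakMaj a b) (h : ℝ → ℝ)
    (hc : ConvexOn ℝ Set.univ h) (H : Monotone h ∨ ∑ i, a i = ∑ i, b i) :
    ∑ i, h (b i) ≤ ∑ i, h (a i) := by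
  choose g hg using hlp_subgrad h hc
  have gmono : Monotone g := by
    intro x y hxy
    rcases hxy.eq_or_lt with rfl | hlt
    · exact le_rfl
    · have h1 := hg x y
      have h2 := hg y x
      by_contra hcon
      push Not at hcon
      nlinarith
  obtain ⟨σ, hσ⟩ := hlp_sort a
  obtain ⟨τ, hτ⟩ := hlp_sort b
  have hd : ∀ k, k ≤ n → 0 ≤ ∑ i ∈ univ.filter (fun i : Fin n => (i : ℕ) < k),
      (a (σ i) - b (τ i)) := by
    intro k hk
    rcases Nat.eq_zero_or_pos k with rfl | h1
    · simp
    · obtain ⟨t, ht⟩ := hlp_thresh a σ hσ k h1 hk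
      have h2 := hlp_top_le a k hk t
      have h3 := hlp_top_ge b τ k hk
      have h4 := W k h1 hk
      rw [sum_sub_distrib]
      linarith
  have hfull : univ.filter (fun i : Fin n => (i : ℕ) < n) = univ := by
    ext i; simp
  have key : ∀ t, (∀ i, t ≤ g (b (τ i))) →
      t * ∑ i, (a (σ i) - b (τ i)) ≤ ∑ i, g (b (τ i)) * (a (σ i) - b (τ i)) := by
    intro t ht
    have := hlp_abel (fun i => if h : i < n then g (b (τ ⟨i, h⟩)) else 0)
      (fun i => if h : i < n then (a (σ ⟨i, h⟩) - b (τ ⟨i, h⟩)) else 0) n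
      (by
        intro i j hij hj
        have hi : i < n := by omega
        simp only [hi, hj, dif_pos]
        exact gmono (hτ (show (⟨i, hi⟩ : Fin n) ≤ ⟨j, hj⟩ from hij)))
      (by
        intro k hk
        rw [hlp_ext (fun i => a (σ i) - b (τ i)) k hk]
        exact hd k hk) t
      (by
        intro i hi
        simp only [hi, dif_pos]
        exact ht _)
    rw [hlp_ext (fun i => a (σ i) - b (τ i)) n le_rfl, hfull] at this
    have e := hlp_ext (fun i => g (b (τ i)) * (a (σ i) - b (τ i))) n le_rfl
    rw [hfull] at e
    rw [← e]
    refine this.trans (le_of_eq (sum_congr rfl fun i hi => ?_))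
    rw [mem_range] at hi
    simp only [hi, dif_pos]
  have pos : 0 ≤ ∑ i, g (b (τ i)) * (a (σ i) - b (τ i)) := by
    rcases H with H | H
    · have := key 0 (fun i => by
        have h1 := hg (b (τ i)) (b (τ i) - 1)
        have h2 := H (show b (τ i) - 1 ≤ b (τ i) by linarith)
        linarith)
      simpa using this
    · have hs : ∑ i, (a (σ i) - b (τ i)) = 0 := by
        rw [sum_sub_distrib, Equiv.sum_comp σ a, Equiv.sum_comp τ b, H, sub_self]
      have := key (-∑ i, |g (b (τ i))|) (fun i => by
        have h1 := single_le_sum (f := fun i => |g (b (τ i))|) (fun j _ => abs_nonneg _)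
          (mem_univ i)
        have h2 := neg_abs_le (g (b (τ i)))
        linarith)
      rw [hs, mul_zero] at this
      exact this
  rw [← Equiv.sum_comp σ (fun i => h (a i)), ← Equiv.sum_comp τ (fun i => h (b i))]
  have := sum_le_sum (s := univ) fun i _ => hg (b (τ i)) (a (σ i))
  rw [sum_add_distrib] at this
  linarith

/-- Lemma 6.1: the Hardy–Littlewood–Pólya inequality, characterizing (weak)
majorization via sums of (nondecreasing) convex functions. -/
theorem hardy_littlewood_polya {n : ℕ} (a b : Fin n → ℝ) :
    ((∀ h : ℝ → ℝ, ConvexOn ℝ Set.univ h → Monotone h →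
        ∑ i, h (b i) ≤ ∑ i, h (a i)) ↔ WeakMaj a b) ∧
    ((∀ h : ℝ → ℝ, ConvexOn ℝ Set.univ h →
        ∑ i, h (b i) ≤ ∑ i, h (a i)) ↔ Maj a b) := by
  refine ⟨⟨hlp_weak_of a b, fun W h hc hm => hlp_of_weak a b W h hc (Or.inl hm)⟩,
    ⟨fun H => ⟨hlp_weak_of a b fun h hc _ => H h hc, ?_⟩,
      fun W h hc => hlp_of_weak a b W.1 h hc (Or.inr W.2)⟩⟩
  have h1 := H (fun x => x) (convexOn_id convex_univ)
  have h2 := H (fun x => -x) (concaveOn_id convex_univ).neg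
  simp only [sum_neg_distrib] at h2
  linarith
end

section
/- Let R ∈ ℝⁿ and let S₂ ⊆ S₁ ⊆ ℝⁿ be nonempty closed convex cones both containing R. Let z be a random vector in ℝⁿ whose coordinates are i.i.d. normal N(0, σ²), and write R̂_{S}(σ) for the metric projection of R + z onto S. Assume E‖R̂_{S₁}(σ) − R‖² > 0 for all σ > 0. Then limsup_{σ → 0} (E‖R̂_{S₂}(σ) − R‖²)/(E‖R̂_{S₁}(σ) − R‖²) ≤ 1 and limsup_{σ → ∞} (E‖R̂_{S₂}(σ) − R‖²)/(E‖R̂_{S₁}(σ) − R‖²) ≤ 1. -/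
open MeasureTheory ProbabilityTheory Filter

/-- The law of a vector in `ℝⁿ` with i.i.d. `N(0, σ²)` coordinates. -/
noncomputable def gaussVec (n : ℕ) (σ : ℝ) : Measure (Fin n → ℝ) :=
  Measure.pi fun _ => gaussianReal 0 ((σ ^ 2).toNNReal)

section helpers

variable {E : Type*} [NormedAddCommGroup E] [InnerProductSpace ℝ E]

def IsPr (S : Set E) (P : E → E) : Prop := ∀ y, P y ∈ S ∧ ∀ r ∈ S, ‖y - P y‖ ≤ ‖y - r‖

lemma IsPr.inner_le {S : Set E} {P : E → E} (h : IsPr S P) (hc : Convex ℝ S) (y w : E)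
    (hw : w ∈ S) : inner ℝ (y - P y) (w - P y) ≤ 0 := by
  have key := norm_eq_iInf_iff_real_inner_le_zero hc (u := y) (h y).1
  refine key.1 ?_ w hw
  have : Nonempty S := ⟨⟨w, hw⟩⟩
  apply le_antisymm
  · exact le_ciInf fun r => (h y).2 r r.2
  · exact ciInf_le (f := fun r : S => ‖y - r‖) ⟨0, by rintro _ ⟨r, rfl⟩; positivity⟩ ⟨P y, (h y).1⟩

lemma IsPr.lip {S : Set E} {P : E → E} (h : IsPr S P) (hc : Convex ℝ S) (x y : E) :
    ‖P x - P y‖ ≤ ‖x - y‖ := by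
  have h1 := h.inner_le hc x (P y) (h y).1
  have h2 := h.inner_le hc y (P x) (h x).1
  have h3 : ‖P x - P y‖ ^ 2 ≤ inner ℝ (x - y) (P x - P y) := by
    rw [← real_inner_self_eq_norm_sq]
    simp only [inner_sub_left, inner_sub_right] at *
    linarith
  have h4 := real_inner_le_norm (x - y) (P x - P y)
  by_contra hlt
  push Not at hlt
  nlinarith [norm_nonneg (x - y), norm_nonneg (P x - P y)]

lemma IsPr.cont {S : Set E} {P : E → E} (h : IsPr S P) (hc : Convex ℝ S) : Continuous P := by
  have : LipschitzWith 1 P := LipschitzWith.of_dist_le_mul fun x y => by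
    simpa [dist_eq_norm] using h.lip hc x y
  exact this.continuous

lemma IsPr.eq_of {S : Set E} {P : E → E} (h : IsPr S P) (hc : Convex ℝ S) (y p : E)
    (hp : p ∈ S) (hle : ∀ w ∈ S, inner ℝ (y - p) (w - p) ≤ 0) : P y = p := by
  have h1 := h.inner_le hc y p hp
  have h2 := hle (P y) (h y).1
  have : ‖P y - p‖ ^ 2 ≤ 0 := by
    rw [← real_inner_self_eq_norm_sq]
    simp only [inner_sub_left, inner_sub_right] at *
    linarith
  have : ‖P y - p‖ = 0 := by nlinarith [norm_nonneg (P y - p)]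
  exact sub_eq_zero.1 (norm_eq_zero.1 this)

lemma IsPr.fix {S : Set E} {P : E → E} (h : IsPr S P) (y : E) (hy : y ∈ S) : P y = y := by
  have := (h y).2 y hy
  simp only [sub_self, norm_zero] at this
  exact (sub_eq_zero.1 (norm_eq_zero.1 (le_antisymm this (norm_nonneg _)))).symm

lemma IsPr.smul {S : Set E} {P : E → E} (h : IsPr S P) (hc : Convex ℝ S)
    (hk : ∀ x ∈ S, ∀ c : ℝ, 0 ≤ c → c • x ∈ S) (s : ℝ) (hs : 0 < s) (y : E) :
    P (s • y) = s • P y := by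
  apply h.eq_of hc
  · exact hk _ (h y).1 s hs.le
  · intro w hw
    have h1 := h.inner_le hc y (s⁻¹ • w) (hk w hw _ (by positivity))
    have h2 : s • y - s • P y = s • (y - P y) := (smul_sub _ _ _).symm
    have h3 : w - s • P y = s • (s⁻¹ • w - P y) := by
      rw [smul_sub, smul_inv_smul₀ hs.ne']
    rw [h2, h3, real_inner_smul_left, real_inner_smul_right]
    exact mul_nonpos_of_nonneg_of_nonpos hs.le (mul_nonpos_of_nonneg_of_nonpos hs.le h1)

lemma cone_add {S : Set E} (hc : Convex ℝ S)
    (hk : ∀ x ∈ S, ∀ c : ℝ, 0 ≤ c → c • x ∈ S) {x y : E} (hx : x ∈ S) (hy : y ∈ S) :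
    x + y ∈ S := by
  have := hc (hk x hx 2 (by norm_num)) (hk y hy 2 (by norm_num)) (a := 1/2) (b := 1/2)
    (by norm_num) (by norm_num) (by norm_num)
  simpa [smul_smul] using this

/-- shifted projection -/
lemma IsPr.self_le {S : Set E} {P : E → E} (h : IsPr S P) (hc : Convex ℝ S) (r z : E)
    (hr : r ∈ S) : ‖P (z + r) - r‖ ^ 2 ≤ inner ℝ z (P (z + r) - r) := by
  have h1 := h.inner_le hc (z + r) r hr
  rw [← real_inner_self_eq_norm_sq]
  simp only [inner_sub_left, inner_sub_right, inner_add_left] at *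
  linarith

lemma norm_le_of_sq {a b : ℝ} (ha : 0 ≤ a) (hb : 0 ≤ b) (h : a ^ 2 ≤ b * a) : a ≤ b := by
  by_contra hlt
  push Not at hlt
  nlinarith

lemma IsPr.norm_le {S : Set E} {P : E → E} (h : IsPr S P) (hc : Convex ℝ S) (r z : E)
    (hr : r ∈ S) : ‖P (z + r) - r‖ ≤ ‖z‖ :=
  norm_le_of_sq (norm_nonneg _) (norm_nonneg _)
    ((h.self_le hc r z hr).trans (real_inner_le_norm _ _))

lemma IsPr.cmp {T : Set E} {p : E → E} (h : IsPr T p) (hc : Convex ℝ T)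
    (hadd : ∀ x ∈ T, ∀ y ∈ T, x + y ∈ T) (z q : E) (hq : q ∈ T)
    (hle : ‖q‖ ^ 2 ≤ inner ℝ z q) : ‖q‖ ≤ ‖p z‖ := by
  have h1 := h.inner_le hc z (p z + q) (hadd _ (h z).1 _ hq)
  rw [add_sub_cancel_left, inner_sub_left] at h1
  have h2 := real_inner_le_norm (p z) q
  exact norm_le_of_sq (norm_nonneg _) (norm_nonneg _) (by linarith)

lemma exists_pr [CompleteSpace E] {T : Set E} (hne : T.Nonempty) (hcl : IsClosed T)
    (hc : Convex ℝ T) : ∃ p : E → E, IsPr T p := by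
  have := fun y => exists_norm_eq_iInf_of_complete_convex hne hcl.isComplete hc y
  choose p hp hp2 using this
  refine ⟨p, fun y => ⟨hp y, fun r hr => ?_⟩⟩
  rw [hp2]
  exact ciInf_le (f := fun r : T => ‖y - r‖) ⟨0, by rintro _ ⟨r, rfl⟩; positivity⟩ ⟨r, hr⟩

/-- union of the shifted cones -/
def tcone (S : Set E) (hc : Convex ℝ S)
    (hk : ∀ x ∈ S, ∀ c : ℝ, 0 ≤ c → c • x ∈ S) (R : E) (hR : R ∈ S) : AddSubmonoid E where
  carrier := {x | ∃ t : ℝ, 0 ≤ t ∧ x + t • R ∈ S}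
  zero_mem' := ⟨1, zero_le_one, by simpa using hR⟩
  add_mem' := by
    rintro x y ⟨s, hs, hx⟩ ⟨t, ht, hy⟩
    refine ⟨s + t, by positivity, ?_⟩
    have := cone_add hc hk hx hy
    convert this using 1
    module

lemma tcone_convex (S : Set E) (hc : Convex ℝ S)
    (hk : ∀ x ∈ S, ∀ c : ℝ, 0 ≤ c → c • x ∈ S) (R : E) (hR : R ∈ S) :
    Convex ℝ (tcone S hc hk R hR : Set E) := by
  rintro x ⟨s, hs, hx⟩ y ⟨t, ht, hy⟩ a b ha hb hab
  refine ⟨a * s + b * t, by positivity, ?_⟩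
  have := hc hx hy ha hb hab
  convert this using 1
  module

lemma tendsto_pr {S : Set E} {P : E → E} (h : IsPr S P) (hc : Convex ℝ S)
    (hk : ∀ x ∈ S, ∀ c : ℝ, 0 ≤ c → c • x ∈ S) (R : E) (hR : R ∈ S) {p : E → E}
    (hp : IsPr (closure (tcone S hc hk R hR : Set E)) p) (z : E) :
    Tendsto (fun t : ℝ => P (z + t • R) - t • R) atTop (nhds (p z)) := by
  have hmem : ∀ t : ℝ, 0 ≤ t →
      P (z + t • R) - t • R ∈ closure (tcone S hc hk R hR : Set E) := fun t ht =>
    subset_closure ⟨t, ht, by simpa using (h _).1⟩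
  have hd : Tendsto (fun t : ℝ => ‖z - (P (z + t • R) - t • R)‖) atTop (nhds ‖z - p z‖) := by
    rw [Metric.tendsto_nhds]
    intro ε hε
    obtain ⟨w, ⟨s, hs, hw⟩, hwd⟩ := Metric.mem_closure_iff.1 (hp z).1 ε hε
    filter_upwards [eventually_ge_atTop s] with t ht
    have h1 := (hp z).2 _ (hmem t (hs.trans ht))
    have h2 : w + t • R ∈ S := by
      have := cone_add hc hk hw (hk R hR (t - s) (by linarith))
      convert this using 1
      module
    have h3 := (h (z + t • R)).2 _ h2
    have e1 : z + t • R - P (z + t • R) = z - (P (z + t • R) - t • R) := by abel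
    have e2 : z + t • R - (w + t • R) = (z - p z) + (p z - w) := by abel
    rw [e1, e2] at h3
    have h4 := norm_add_le (z - p z) (p z - w)
    rw [dist_eq_norm] at hwd
    rw [Real.dist_eq, abs_of_nonneg (by linarith)]
    linarith
  have hsq : Tendsto (fun t : ℝ => ‖(P (z + t • R) - t • R) - p z‖ ^ 2) atTop (nhds 0) := by
    have hu : Tendsto (fun t : ℝ => ‖z - (P (z + t • R) - t • R)‖ ^ 2 - ‖z - p z‖ ^ 2) atTop
        (nhds 0) := by
      have h0 := (hd.pow 2).sub_const (‖z - p z‖ ^ 2)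
      rwa [sub_self] at h0
    refine squeeze_zero' (Eventually.of_forall fun t => by positivity) ?_ hu
    filter_upwards [eventually_ge_atTop 0] with t ht
    have h1 := hp.inner_le (tcone_convex S hc hk R hR).closure z _ (hmem t ht)
    generalize P (z + t • R) - t • R = q at *
    have e : z - q = (z - p z) - (q - p z) := by abel
    rw [e, norm_sub_sq_real (z - p z)]
    linarith
  rw [tendsto_iff_norm_sub_tendsto_zero]
  have := hsq.sqrt
  simpa using this

end helpers

lemma gaussVec_scale (n : ℕ) (σ : ℝ) :
    gaussVec n σ = (gaussVec n 1).map (fun z => σ • z) := by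
  unfold gaussVec
  have := Measure.pi_map_pi (μ := fun _ : Fin n => gaussianReal 0 (((1:ℝ) ^ 2).toNNReal))
    (f := fun _ x => σ * x) (fun i => by fun_prop)
  have e : (fun z : Fin n → ℝ => σ • z) = fun x i => σ * x i := by
    ext z i; simp
  rw [e, this]
  congr 1
  ext1 i
  rw [gaussianReal_map_const_mul]
  congr 1
  · simp
  · ext; simp [sq_nonneg]

instance gaussVec_prob (n : ℕ) (σ : ℝ) : IsProbabilityMeasure (gaussVec n σ) := by
  unfold gaussVec; infer_instance

instance gaussVec_pos (n : ℕ) : (gaussVec n 1).IsOpenPosMeasure := by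
  unfold gaussVec
  have : (gaussianReal 0 (((1:ℝ) ^ 2).toNNReal)).IsOpenPosMeasure :=
    (gaussianReal_absolutelyContinuous' 0 (by simp)).isOpenPosMeasure
  infer_instance

lemma cont_toE (n : ℕ) : Continuous fun z : Fin n → ℝ => (WithLp.equiv 2 (Fin n → ℝ)).symm z :=
  PiLp.continuous_toLp 2 _

lemma gaussVec_int (n : ℕ) :
    Integrable (fun z : Fin n → ℝ => ‖(WithLp.equiv 2 (Fin n → ℝ)).symm z‖ ^ 2)
      (gaussVec n 1) := by
  simp only [EuclideanSpace.norm_sq_eq]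
  apply integrable_finsetSum
  intro i _
  have h1 : Integrable (fun x : ℝ => ‖x‖ ^ 2) (gaussianReal 0 (((1:ℝ) ^ 2).toNNReal)) :=
    (memLp_id_gaussianReal (μ := 0) (v := ((1:ℝ) ^ 2).toNNReal) 2).integrable_norm_pow (by norm_num)
  exact (measurePreserving_eval (fun _ : Fin n => gaussianReal 0 (((1:ℝ) ^ 2).toNNReal)) i).integrable_comp_of_integrable h1

/-- normalised risk -/
noncomputable def nrisk {n : ℕ} (P : EuclideanSpace ℝ (Fin n) → EuclideanSpace ℝ (Fin n))
    (R : EuclideanSpace ℝ (Fin n)) (t : ℝ) : ℝ :=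
  ∫ z : Fin n → ℝ, ‖P ((WithLp.equiv 2 (Fin n → ℝ)).symm z + t • R) - t • R‖ ^ 2 ∂(gaussVec n 1)

section main
variable {n : ℕ} {S : Set (EuclideanSpace ℝ (Fin n))}
  {P : EuclideanSpace ℝ (Fin n) → EuclideanSpace ℝ (Fin n)}

lemma risk_eq (h : IsPr S P) (hc : Convex ℝ S)
    (hk : ∀ x ∈ S, ∀ c : ℝ, 0 ≤ c → c • x ∈ S) (R : EuclideanSpace ℝ (Fin n))
    (σ : ℝ) (hσ : 0 < σ) :
    ∫ z : Fin n → ℝ, ‖P (R + (WithLp.equiv 2 (Fin n → ℝ)).symm z) - R‖ ^ 2 ∂(gaussVec n σ)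
      = σ ^ 2 * nrisk P R σ⁻¹ := by
  have hP := h.cont hc
  have hT := cont_toE n
  rw [gaussVec_scale, integral_map (by fun_prop)
    (Continuous.aestronglyMeasurable (by fun_prop)), nrisk, ← integral_const_mul]
  congr 1
  ext z
  have e : R + (WithLp.equiv 2 (Fin n → ℝ)).symm (σ • z)
      = σ • ((WithLp.equiv 2 (Fin n → ℝ)).symm z + σ⁻¹ • R) := by
    rw [smul_add, smul_inv_smul₀ hσ.ne', add_comm]; rfl
  rw [e, h.smul hc hk σ hσ]
  have e2 : ∀ x : EuclideanSpace ℝ (Fin n), σ • x - R = σ • (x - σ⁻¹ • R) := fun x => by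
    rw [smul_sub, smul_inv_smul₀ hσ.ne']
  rw [e2, norm_smul, mul_pow, Real.norm_of_nonneg hσ.le]

lemma int_of (g : EuclideanSpace ℝ (Fin n) → EuclideanSpace ℝ (Fin n)) (hg : Continuous g)
    (hle : ∀ z, ‖g z‖ ≤ ‖z‖) :
    Integrable (fun z : Fin n → ℝ => ‖g ((WithLp.equiv 2 (Fin n → ℝ)).symm z)‖ ^ 2)
      (gaussVec n 1) := by
  have hT := cont_toE n
  refine (gaussVec_int n).mono' (Continuous.aestronglyMeasurable (by fun_prop)) ?_
  refine Eventually.of_forall fun z => ?_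
  rw [Real.norm_of_nonneg (by positivity)]
  gcongr
  exact hle _

lemma tendsto_of (h : IsPr S P) (hc : Convex ℝ S)
    (hk : ∀ x ∈ S, ∀ c : ℝ, 0 ≤ c → c • x ∈ S) (R : EuclideanSpace ℝ (Fin n)) (hR : R ∈ S)
    (l : Filter ℝ) [l.IsCountablyGenerated] (hl : ∀ᶠ t in l, 0 ≤ t)
    (g : EuclideanSpace ℝ (Fin n) → EuclideanSpace ℝ (Fin n))
    (hlim : ∀ z, Tendsto (fun t : ℝ => P (z + t • R) - t • R) l (nhds (g z))) :
    Tendsto (nrisk P R) l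
      (nhds (∫ z : Fin n → ℝ, ‖g ((WithLp.equiv 2 (Fin n → ℝ)).symm z)‖ ^ 2 ∂(gaussVec n 1))) := by
  have hP := h.cont hc
  have hT := cont_toE n
  unfold nrisk
  refine tendsto_integral_filter_of_dominated_convergence
    (fun z : Fin n → ℝ => ‖(WithLp.equiv 2 (Fin n → ℝ)).symm z‖ ^ 2) ?_ ?_ (gaussVec_int n) ?_
  · exact Eventually.of_forall fun t => Continuous.aestronglyMeasurable (by fun_prop)
  · filter_upwards [hl] with t ht
    refine Eventually.of_forall fun z => ?_
    rw [Real.norm_of_nonneg (by positivity)]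
    gcongr
    exact h.norm_le hc _ _ (hk R hR t ht)
  · exact Eventually.of_forall fun z => ((hlim _).norm.pow 2)

lemma nrisk_nonneg (R : EuclideanSpace ℝ (Fin n)) (t : ℝ) : 0 ≤ nrisk P R t :=
  integral_nonneg fun _ => by positivity

end main

lemma limsup_le_one {l : Filter ℝ} [l.NeBot] {f g : ℝ → ℝ} (hf : ∀ᶠ x in l, 0 ≤ f x)
    (hfg : ∀ᶠ x in l, f x ≤ g x) {a : ℝ} (ha : a ≤ 1) (hg : Tendsto g l (nhds a)) :
    limsup f l ≤ 1 := by
  refine le_trans ?_ ha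
  rw [← hg.limsup_eq]
  refine limsup_le_limsup hfg ?_ hg.isBoundedUnder_le
  exact IsCoboundedUnder.of_frequently_ge (a := 0) hf.frequently

/-- Proposition 2.2 (`prop:improve`): for nested closed convex cones `S₂ ⊆ S₁` both
containing the ground truth `R`, the risk of projecting onto the smaller cone is
asymptotically no larger, both as `σ → 0⁺` and as `σ → ∞`. -/
theorem nested_cone_risk_limsup {n : ℕ}
    (R : EuclideanSpace ℝ (Fin n))
    (S₁ S₂ : Set (EuclideanSpace ℝ (Fin n)))
    (hsub : S₂ ⊆ S₁)
    (hcl₁ : IsClosed S₁) (hcl₂ : IsClosed S₂)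
    (hconv₁ : Convex ℝ S₁) (hconv₂ : Convex ℝ S₂)
    (hcone₁ : ∀ x ∈ S₁, ∀ c : ℝ, 0 ≤ c → c • x ∈ S₁)
    (hcone₂ : ∀ x ∈ S₂, ∀ c : ℝ, 0 ≤ c → c • x ∈ S₂)
    (hR₁ : R ∈ S₁) (hR₂ : R ∈ S₂)
    (P₁ P₂ : EuclideanSpace ℝ (Fin n) → EuclideanSpace ℝ (Fin n))
    (hP₁ : ∀ y, P₁ y ∈ S₁ ∧ ∀ r ∈ S₁, ‖y - P₁ y‖ ≤ ‖y - r‖)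
    (hP₂ : ∀ y, P₂ y ∈ S₂ ∧ ∀ r ∈ S₂, ‖y - P₂ y‖ ≤ ‖y - r‖)
    (risk₁ risk₂ : ℝ → ℝ)
    (hrisk₁ : ∀ σ : ℝ, risk₁ σ = ∫ z : Fin n → ℝ, ‖P₁ (R + (WithLp.equiv 2 (Fin n → ℝ)).symm z) - R‖ ^ 2 ∂(gaussVec n σ))
    (hrisk₂ : ∀ σ : ℝ, risk₂ σ = ∫ z : Fin n → ℝ, ‖P₂ (R + (WithLp.equiv 2 (Fin n → ℝ)).symm z) - R‖ ^ 2 ∂(gaussVec n σ))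
    (hpos : ∀ σ : ℝ, 0 < σ → 0 < risk₁ σ) :
    limsup (fun σ => risk₂ σ / risk₁ σ) (nhdsWithin 0 (Set.Ioi 0)) ≤ 1 ∧
      limsup (fun σ => risk₂ σ / risk₁ σ) atTop ≤ 1 := by
  have h1 : IsPr S₁ P₁ := hP₁
  have h2 : IsPr S₂ P₂ := hP₂
  have r1 : ∀ σ, 0 < σ → risk₁ σ = σ ^ 2 * nrisk P₁ R σ⁻¹ := fun σ hσ => by
    rw [hrisk₁, risk_eq h1 hconv₁ hcone₁ R σ hσ]
  have r2 : ∀ σ, 0 < σ → risk₂ σ = σ ^ 2 * nrisk P₂ R σ⁻¹ := fun σ hσ => by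
    rw [hrisk₂, risk_eq h2 hconv₂ hcone₂ R σ hσ]
  have hratio : ∀ σ, 0 < σ → risk₂ σ / risk₁ σ = nrisk P₂ R σ⁻¹ / nrisk P₁ R σ⁻¹ := by
    intro σ hσ
    rw [r1 σ hσ, r2 σ hσ, mul_div_mul_left _ _ (by positivity)]
  have hpos1 : 0 < nrisk P₁ R 1 := by
    have := hpos 1 one_pos
    rw [r1 1 one_pos] at this
    simpa using this
  have hnn : ∀ σ, 0 < σ → 0 ≤ risk₂ σ / risk₁ σ := fun σ hσ => by
    rw [hratio σ hσ]; exact div_nonneg (nrisk_nonneg _ _) (nrisk_nonneg _ _)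
  constructor
  · -- small noise
    obtain ⟨p, hp⟩ := exists_pr
      (T := closure (tcone S₁ hconv₁ hcone₁ R hR₁ : Set (EuclideanSpace ℝ (Fin n))))
      ⟨0, subset_closure (zero_mem (tcone S₁ hconv₁ hcone₁ R hR₁))⟩ isClosed_closure (tcone_convex S₁ hconv₁ hcone₁ R hR₁).closure
    have hTc := (tcone_convex S₁ hconv₁ hcone₁ R hR₁).closure
    have hlim := tendsto_of h1 hconv₁ hcone₁ R hR₁ atTop (eventually_ge_atTop 0) p
      (tendsto_pr h1 hconv₁ hcone₁ R hR₁ hp)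
    have hTadd : ∀ x ∈ closure (tcone S₁ hconv₁ hcone₁ R hR₁ : Set (EuclideanSpace ℝ (Fin n))),
        ∀ y ∈ closure (tcone S₁ hconv₁ hcone₁ R hR₁ : Set (EuclideanSpace ℝ (Fin n))),
        x + y ∈ closure (tcone S₁ hconv₁ hcone₁ R hR₁ : Set (EuclideanSpace ℝ (Fin n))) := fun x hx y hy =>
      (tcone S₁ hconv₁ hcone₁ R hR₁).topologicalClosure.add_mem hx hy
    have hT0 : (0 : EuclideanSpace ℝ (Fin n)) ∈
        closure (tcone S₁ hconv₁ hcone₁ R hR₁ : Set (EuclideanSpace ℝ (Fin n))) := subset_closure (zero_mem _)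
    set A := ∫ z : Fin n → ℝ, ‖p ((WithLp.equiv 2 (Fin n → ℝ)).symm z)‖ ^ 2 ∂(gaussVec n 1) with hA
    have hle : ∀ (S : Set (EuclideanSpace ℝ (Fin n))) P, IsPr S P → Convex ℝ S → S ⊆ S₁ →
        (∀ x ∈ S, ∀ c : ℝ, 0 ≤ c → c • x ∈ S) → R ∈ S → ∀ t, 0 ≤ t → nrisk P R t ≤ A := by
      intro S P h hc hs hk hR t ht
      have hcont := h.cont hc
      refine integral_mono
        (int_of (fun z => P (z + t • R) - t • R) (by fun_prop)
          (fun z => h.norm_le hc _ _ (hk R hR t ht)))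
        (int_of p (hp.cont hTc) (fun z => by simpa using hp.norm_le hTc 0 z hT0)) ?_
      intro z
      have := hp.cmp hTc hTadd _ _ (subset_closure ⟨t, ht, by simpa using hs (h _).1⟩)
        (h.self_le hc (t • R) ((WithLp.equiv 2 (Fin n → ℝ)).symm z) (hk R hR t ht))
      dsimp only
      gcongr
    have hApos : 0 < A := hpos1.trans_le
      (hle S₁ P₁ h1 hconv₁ subset_rfl hcone₁ hR₁ 1 zero_le_one)
    refine limsup_le_one (g := fun σ => A / nrisk P₁ R σ⁻¹) (a := 1) ?_ ?_ le_rfl ?_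
    · filter_upwards [self_mem_nhdsWithin] with σ hσ using hnn σ hσ
    · filter_upwards [self_mem_nhdsWithin] with σ hσ
      have hσ' : (0:ℝ) < σ := hσ
      rw [hratio σ hσ]
      exact div_le_div_of_nonneg_right
        (hle S₂ P₂ h2 hconv₂ hsub hcone₂ hR₂ _ (by positivity)) (nrisk_nonneg _ _)
    · have := (tendsto_const_nhds (x := A)).div (hlim.comp tendsto_inv_nhdsGT_zero) hApos.ne'
      rw [div_self hApos.ne'] at this
      exact this
  · -- large noise
    have lim : ∀ (S : Set (EuclideanSpace ℝ (Fin n))) P, IsPr S P → Convex ℝ S →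
        (∀ x ∈ S, ∀ c : ℝ, 0 ≤ c → c • x ∈ S) → R ∈ S →
        Tendsto (nrisk P R) (nhdsWithin 0 (Set.Ioi 0)) (nhds (nrisk P R 0)) := by
      intro S P h hc hk hR
      have hcont := h.cont hc
      have := tendsto_of h hc hk R hR (nhdsWithin 0 (Set.Ioi 0))
        (by filter_upwards [self_mem_nhdsWithin] with t ht using le_of_lt ht) P ?_
      · simpa [nrisk] using this
      · intro z
        have hh : Continuous (fun t : ℝ => P (z + t • R) - t • R) := by fun_prop
        have := (hh.tendsto 0).mono_left (nhdsWithin_le_nhds (s := Set.Ioi 0))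
        simpa using this
    have z1 : (0 : EuclideanSpace ℝ (Fin n)) ∈ S₁ := by simpa using hcone₁ R hR₁ 0 le_rfl
    have z2 : (0 : EuclideanSpace ℝ (Fin n)) ∈ S₂ := by simpa using hcone₂ R hR₂ 0 le_rfl
    have c1 := h1.cont hconv₁
    have c2 := h2.cont hconv₂
    have i1 := int_of P₁ c1 (fun z => by simpa using h1.norm_le hconv₁ 0 z z1)
    have i2 := int_of P₂ c2 (fun z => by simpa using h2.norm_le hconv₂ 0 z z2)
    have hle : nrisk P₂ R 0 ≤ nrisk P₁ R 0 := by
      simp only [nrisk, zero_smul, add_zero, sub_zero]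
      refine integral_mono i2 i1 fun z => ?_
      have := h1.cmp hconv₁ (fun x hx y hy => cone_add hconv₁ hcone₁ hx hy)
        ((WithLp.equiv 2 (Fin n → ℝ)).symm z) (P₂ ((WithLp.equiv 2 (Fin n → ℝ)).symm z))
        (hsub (h2 _).1)
        (by simpa using h2.self_le hconv₂ 0 ((WithLp.equiv 2 (Fin n → ℝ)).symm z) z2)
      dsimp only
      gcongr
    have h0 : 0 < nrisk P₁ R 0 := by
      refine lt_of_le_of_ne (nrisk_nonneg _ _) fun h => ?_
      simp only [nrisk, zero_smul, add_zero, sub_zero] at h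
      have hT := cont_toE n
      have hae := (integral_eq_zero_iff_of_nonneg (fun z => by positivity) i1).1 h.symm
      have hall := Continuous.ae_eq_iff_eq (gaussVec n 1) (by fun_prop) continuous_const |>.1 hae
      have hS : ∀ x ∈ S₁, x = 0 := by
        intro x hx
        have := congrFun hall (WithLp.equiv 2 (Fin n → ℝ) x)
        have h3 : ‖P₁ x‖ ^ 2 = 0 := this
        rw [h1.fix x hx] at h3
        exact norm_eq_zero.1 (pow_eq_zero_iff two_ne_zero |>.1 h3)
      have : nrisk P₁ R 1 = 0 := by
        have e : ∀ y, P₁ y = 0 := fun y => hS _ (h1 y).1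
        simp [nrisk, e, hS R hR₁]
      linarith
    have l1 := (lim S₁ P₁ h1 hconv₁ hcone₁ hR₁).comp tendsto_inv_atTop_nhdsGT_zero
    have l2 := (lim S₂ P₂ h2 hconv₂ hcone₂ hR₂).comp tendsto_inv_atTop_nhdsGT_zero
    refine limsup_le_one (g := fun σ => nrisk P₂ R σ⁻¹ / nrisk P₁ R σ⁻¹)
      (a := nrisk P₂ R 0 / nrisk P₁ R 0) ?_ ?_ ((div_le_one h0).2 hle) ?_
    · filter_upwards [eventually_gt_atTop 0] with σ hσ using hnn σ hσ
    · filter_upwards [eventually_gt_atTop 0] with σ hσ using (hratio σ hσ).le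
    · exact l2.div l1 h0.ne'
end

section
/- Let {S_k} be a collection of at least two closed subsets of ℝ, each with nonempty interior, whose union is ℝ and such that the interior of each element is disjoint from every other element. Then there exist a real number R, an element S of the collection with R in the interior of S, and a different element S′, such that the unique point of S′ at minimum distance from R is strictly greater than R. Consequently, in the noiseless setting with the nondecreasing convex utility U(x) = x, the owner strictly increases her utility by reporting S′ instead of the truthful element S, so no nontrivial such partition of ℝ is truthful. -/
/-- Proposition 2.3 (`prop:n=1`): no nontrivial knowledge partition of `ℝ` is truthful.
For any collection of at least two closed sets with nonempty interiors covering `ℝ`,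
whose interiors are disjoint from the other elements, there are a ground truth `R`
lying in the interior of a truthful element `S` and a different element `S'` whose
unique closest point to `R` is strictly larger than `R`; hence with the nondecreasing
convex utility `U(x) = x` the owner strictly gains by misreporting `S'`. -/
theorem no_truthful_partition_dim_one (𝒮 : Set (Set ℝ))
    (hcl : ∀ S ∈ 𝒮, IsClosed S)
    (hint : ∀ S ∈ 𝒮, (interior S).Nonempty)
    (hcover : ⋃₀ 𝒮 = Set.univ)
    (hdisj : ∀ S ∈ 𝒮, ∀ T ∈ 𝒮, S ≠ T → interior S ∩ T = ∅)
    (hnontriv : ∃ S ∈ 𝒮, ∃ T ∈ 𝒮, S ≠ T) :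
    ∃ R : ℝ, ∃ S ∈ 𝒮, R ∈ interior S ∧
      ∃ S' ∈ 𝒮, S' ≠ S ∧ ∃ p ∈ S',
        (∀ q ∈ S', |R - p| ≤ |R - q|) ∧
        (∀ q ∈ S', (∀ q' ∈ S', |R - q| ≤ |R - q'|) → q = p) ∧
        R < p := by
  have key : ∀ S ∈ 𝒮, ∀ T ∈ 𝒮, S ≠ T → ∀ a ∈ interior S, ∀ b ∈ interior T, a < b →
      ∃ R : ℝ, ∃ S ∈ 𝒮, R ∈ interior S ∧
      ∃ S' ∈ 𝒮, S' ≠ S ∧ ∃ p ∈ S',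
        (∀ q ∈ S', |R - p| ≤ |R - q|) ∧
        (∀ q ∈ S', (∀ q' ∈ S', |R - q| ≤ |R - q'|) → q = p) ∧
        R < p := by
    intro S hS T hT hST a ha b hb hab
    have haT : a ∉ T := fun h => by
      have : a ∈ interior S ∩ T := ⟨ha, h⟩
      rw [hdisj S hS T hT hST] at this
      exact this
    have hbdd : BddBelow (T ∩ Set.Ici a) := ⟨a, fun x hx => hx.2⟩
    have hmem : sInf (T ∩ Set.Ici a) ∈ T ∩ Set.Ici a :=
      ((hcl T hT).inter isClosed_Ici).csInf_mem ⟨b, interior_subset hb, hab.le⟩ hbdd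
    have hle : ∀ q ∈ T, a ≤ q → sInf (T ∩ Set.Ici a) ≤ q :=
      fun q hq h => csInf_le hbdd ⟨hq, h⟩
    generalize sInf (T ∩ Set.Ici a) = d at hmem hle
    obtain ⟨hdT, had⟩ := hmem
    have had : a < d := lt_of_le_of_ne had (fun h => haT (h ▸ hdT))
    have hcount : 𝒮.Countable := by
      refine Set.PairwiseDisjoint.countable_of_nonempty_interior (s := fun S : Set ℝ => interior S)
        (a := 𝒮) ?_ ?_
      · intro A hA B hB hAB
        rw [Function.onFun, Set.disjoint_iff]
        intro x hx
        rw [← hdisj A hA B hB hAB]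
        exact ⟨hx.1, interior_subset hx.2⟩
      · intro A hA
        simpa using hint A hA
    have hdense := dense_sUnion_interior_of_closed hcl hcount hcover
    obtain ⟨R, hR, hR'⟩ := hdense.inter_open_nonempty (Set.Ioo ((a + d) / 2) d) isOpen_Ioo
      (Set.nonempty_Ioo.2 (by linarith))
    simp only [Set.mem_iUnion] at hR'
    obtain ⟨A, hA, hRA⟩ := hR'
    obtain ⟨h1, h2⟩ := hR
    have hlt : ∀ q ∈ T, q ≠ d → |R - d| < |R - q| := by
      intro q hq hne
      rw [abs_of_neg (by linarith : R - d < 0)]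
      rcases le_or_gt a q with h | h
      · have := lt_of_le_of_ne (hle q hq h) hne.symm
        rw [abs_of_neg (by linarith)]
        linarith
      · rw [abs_of_pos (by linarith)]
        linarith
    refine ⟨R, A, hA, hRA, T, hT, ?_, d, hdT, ?_, ?_, h2⟩
    · rintro rfl
      have := hle R (interior_subset hRA) (by linarith)
      linarith
    · intro q hq
      by_cases h : q = d
      · rw [h]
      · exact (hlt q hq h).le
    · intro q hq h
      by_contra hne
      exact absurd (h d hdT) (not_le.2 (hlt q hq hne))
  obtain ⟨S, hS, T, hT, hST⟩ := hnontriv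
  obtain ⟨a, ha⟩ := hint S hS
  obtain ⟨b, hb⟩ := hint T hT
  rcases lt_trichotomy a b with h | h | h
  · exact key S hS T hT hST a ha b hb h
  · subst h
    have : a ∈ interior S ∩ T := ⟨ha, interior_subset hb⟩
    rw [hdisj S hS T hT hST] at this
    exact this.elim
  · exact key T hT S hS hST.symm b hb a ha h
end

section
/- Let I = (I₁,…,I_p) be an ordered partition of {1,…,n}, let S_I = {x ∈ ℝⁿ : x_i ≥ x_j for all i ∈ I_q, j ∈ I_{q′} with q < q′}, let y ∈ ℝⁿ, and let R̂ denote the metric projection of y onto S_I. Then for every block I_q and every pair of indices j, k ∈ I_q, y_j ≥ y_k implies R̂_j ≥ R̂_k. Consequently, R̂ coincides with the metric projection of y onto the isotonic cone {r ∈ ℝⁿ : r_{π(1)} ≥ r_{π(2)} ≥ ⋯ ≥ r_{π(n)}}, where π is any permutation listing the indices of I₁ in decreasing order of their y-values, then the indices of I₂ in decreasing order of their y-values, and so on. -/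
open Finset

/-- The coarse-ranking cone `S_I` associated with an ordered partition
`I = (I₁, …, I_p)` of `{1, …, n}`. -/
def coarseCone {n p : ℕ} (I : Fin p → Finset (Fin n)) : Set (EuclideanSpace ℝ (Fin n)) :=
  {x | ∀ q q' : Fin p, q < q' → ∀ i ∈ I q, ∀ j ∈ I q', x j ≤ x i}

/-- The isotonic cone `{r : r_{π(1)} ≥ r_{π(2)} ≥ ⋯ ≥ r_{π(n)}}` associated with a
ranking `π`. -/
def rankCone {n : ℕ} (π : Equiv.Perm (Fin n)) : Set (EuclideanSpace ℝ (Fin n)) :=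
  {r | ∀ k l : Fin n, k ≤ l → r (π l) ≤ r (π k)}

/-- `π` lists the indices of `I₁` in decreasing order of their `y`-values, then the
indices of `I₂` in decreasing order of their `y`-values, and so on. -/
def SortsBlocks {n p : ℕ} (I : Fin p → Finset (Fin n)) (y : EuclideanSpace ℝ (Fin n))
    (π : Equiv.Perm (Fin n)) : Prop :=
  ∀ k l : Fin n, k ≤ l → ∀ q q' : Fin p, π k ∈ I q → π l ∈ I q' →
    q ≤ q' ∧ (q = q' → y (π l) ≤ y (π k))

/-- Lemma 6.11 (`lm:reduce_iso`): the projection onto the coarse cone `S_I` preserves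
the within-block order of `y`, and coincides with the projection of `y` onto the
isotonic cone of any permutation sorting each block of `I` by decreasing `y`-values. -/
theorem coarse_projection_eq_isotonic {n p : ℕ}
    (I : Fin p → Finset (Fin n))
    (hIDisj : ∀ q q' : Fin p, q ≠ q' → Disjoint (I q) (I q'))
    (hICover : Finset.univ.biUnion I = Finset.univ)
    (y Rhat : EuclideanSpace ℝ (Fin n))
    (hRhat : IsProjOn (coarseCone I) y Rhat) :
    (∀ q : Fin p, ∀ j ∈ I q, ∀ k ∈ I q, y k ≤ y j → Rhat k ≤ Rhat j) ∧
      ∀ π : Equiv.Perm (Fin n), SortsBlocks I y π →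
        IsProjOn (rankCone π) y Rhat := by
  obtain ⟨hmem, hmin⟩ := hRhat
  have h1 : ∀ q : Fin p, ∀ j ∈ I q, ∀ k ∈ I q, y k ≤ y j → Rhat k ≤ Rhat j := by
    intro q j hj k hk hy
    by_contra hlt
    push Not at hlt
    have hne : j ≠ k := by
      rintro rfl
      exact lt_irrefl _ hlt
    have hsw : ∀ (r : Fin p) (i : Fin n), i ∈ I r → Equiv.swap j k i ∈ I r := by
      intro r i hi
      have hblock : ∀ x, x ∈ I q → x ∈ I r → q = r := by
        intro x hx hx'
        by_contra hqr
        exact Finset.disjoint_left.mp (hIDisj q r hqr) hx hx'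
      by_cases hij : i = j
      · subst hij
        have := hblock i hj hi
        subst this
        simpa using hk
      · by_cases hik : i = k
        · subst hik
          have := hblock i hk hi
          subst this
          simpa using hj
        · rwa [Equiv.swap_apply_of_ne_of_ne hij hik]
    let m : EuclideanSpace ℝ (Fin n) :=
      WithLp.toLp 2 (fun i => (Rhat i + Rhat (Equiv.swap j k i)) / 2)
    have hm : ∀ i, m i = (Rhat i + Rhat (Equiv.swap j k i)) / 2 := fun i => rfl
    have hmS : m ∈ coarseCone I := by
      intro r r' hr i hi i' hi'
      rw [hm, hm]
      have a1 := hmem r r' hr i hi i' hi'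
      have a2 := hmem r r' hr _ (hsw r i hi) _ (hsw r' i' hi')
      linarith
    have hle := hmin m hmS
    have hsq : ‖y - Rhat‖ ^ 2 ≤ ‖y - m‖ ^ 2 := by gcongr
    rw [EuclideanSpace.real_norm_sq_eq, EuclideanSpace.real_norm_sq_eq, ← sub_nonneg,
      ← Finset.sum_sub_distrib] at hsq
    rw [← Finset.sum_subset (Finset.subset_univ {j, k}), Finset.sum_pair hne] at hsq
    · simp only [PiLp.sub_apply, hm, Equiv.swap_apply_left, Equiv.swap_apply_right] at hsq
      nlinarith [mul_nonneg (sub_nonneg.mpr hy) (sub_pos.mpr hlt).le,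
        mul_pos (sub_pos.mpr hlt) (sub_pos.mpr hlt)]
    · intro i _ hi
      simp only [Finset.mem_insert, Finset.mem_singleton, not_or] at hi
      simp only [PiLp.sub_apply, hm, Equiv.swap_apply_of_ne_of_ne hi.1 hi.2]
      ring
  refine ⟨h1, fun π hπ => ⟨?_, ?_⟩⟩
  · intro k l hkl
    have hcov : ∀ i, ∃ q, i ∈ I q := by
      intro i
      have : i ∈ Finset.univ.biUnion I := hICover ▸ Finset.mem_univ i
      simpa using this
    obtain ⟨q, hq⟩ := hcov (π k)
    obtain ⟨q', hq'⟩ := hcov (π l)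
    obtain ⟨hle, hs⟩ := hπ k l hkl q q' hq hq'
    rcases hle.eq_or_lt with h | h
    · exact h1 q _ hq _ (h ▸ hq') (hs h)
    · exact hmem q q' h _ hq _ hq'
  · intro r hr
    apply hmin
    intro q q' hqq i hi j hj
    rcases le_total (π.symm i) (π.symm j) with h | h
    · simpa using hr _ _ h
    · have := (hπ _ _ h q' q (by simpa using hj) (by simpa using hi)).1
      exact absurd hqq (not_lt.mpr this)
end
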